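/- arXiv:2105.01556 — 2 statements merged into one kernel-verified Lean document; each statement's English description precedes it below -/
import Mathlib

section
/- Let A be a unital C*-algebra, ζ a complex number with |ζ| = 1, n ≥ 1, and d_1, …, d_n integers. If the family (u^{ij}_{kl})_{1 ≤ i,j,k,l ≤ n} in A satisfies the ζ-twisted Wang relations with weights d, then ‖u^{ij}_{kl}‖ ≤ 1 for all 1 ≤ i,j,k,l ≤ n. -/
/-!
Put `v i j k l = ζ ^ (d j * (d k - d i + d j - d l)) • u i j k l`. The twist disappears in these
rescaled generators: they satisfy `star (v i j k l) = v j i l k`, and (R1) for equal indices reads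
`∑ t, v i t k s * star (v i t k s) = v i i k k` for every `s`. Since the left-hand side is a sum of
positive elements, `‖v i t k s‖ ^ 2 ≤ ‖v i i k k‖`. For `t = i`, `s = k` this gives
`‖v i i k k‖ ≤ 1`, hence `‖v i t k s‖ ≤ 1` in general, and `u` has the same norms as `v` because
`|ζ| = 1`.
-/

open Finset

/-- The `ζ`-twisted Wang relations with weights `d` for a family
`u : Fin n → Fin n → Fin n → Fin n → A` (where `u i j k l` stands for
`u^{ij}_{kl}`) in a unital complex ⋆-algebra `A`. -/
def WangRel {A : Type*} [Ring A] [Algebra ℂ A] [StarRing A]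
    (ζ : ℂ) {n : ℕ} (d : Fin n → ℤ) (u : Fin n → Fin n → Fin n → Fin n → A) : Prop :=
  -- (R1)
  (∀ i j k l s m : Fin n,
    ∑ t : Fin n, (ζ ^ (d t * (d k - d i + d t - d s)) • u i t k s) *
        (ζ ^ (d j * (d m - d t + d j - d l)) • u t j m l) =
      if s = m then ζ ^ (d j * (d k - d i + d j - d l)) • u i j k l else 0) ∧
  -- (R2)
  (∀ i j k l s m : Fin n,
    ∑ t : Fin n, (ζ ^ (d s * (d k - d i + d s - d t)) • u i s k t) *
        (ζ ^ (d j * (d t - d m + d j - d l)) • u m j t l) =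
      if s = m then ζ ^ (d j * (d k - d i + d j - d l)) • u i j k l else 0) ∧
  -- (R3)
  (∀ i j k l : Fin n,
    star (u i j k l) = ζ ^ ((d i - d j) * (d l - d j + d i - d k)) • u j i l k) ∧
  -- (R4)
  (∀ i j : Fin n, ∑ r : Fin n, u i j r r = if i = j then 1 else 0) ∧
  -- (R5)
  (∀ k l : Fin n, ∑ r : Fin n, u r r k l = if k = l then 1 else 0)

/-- Positivity of the summands `a t * star (a t)` and monotonicity of the C⋆-norm on positive
elements bound each `a t` by the norm of the sum. -/
lemma norm_sq_le_norm_of_sum_mul_star {A ι : Type*} [CStarAlgebra A] [Fintype ι]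
    (a : ι → A) (p : A) (h : ∑ t, a t * star (a t) = p) (t : ι) :
    ‖a t‖ ^ 2 ≤ ‖p‖ := by
  -- The spectral order turns the algebra into a star-ordered ring.
  let := CStarAlgebra.spectralOrder A
  have := CStarAlgebra.spectralOrderedRing A
  have hle : a t * star (a t) ≤ p := by
    rw [← h]
    exact Finset.single_le_sum (f := fun t => a t * star (a t))
      (fun i _ => mul_star_self_nonneg (a i)) (Finset.mem_univ t)
  have := CStarAlgebra.norm_le_norm_of_nonneg_of_le (mul_star_self_nonneg (a t)) hle
  rwa [CStarRing.norm_self_mul_star, ← sq] at this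

/-- In an abstract form: a family whose "row sums of squares" are its diagonal entries consists of
contractions. -/
lemma norm_le_one_of_sum_mul_star {A ι : Type*} [CStarAlgebra A] [Fintype ι]
    (v : ι → ι → ι → ι → A)
    (h : ∀ i k s, ∑ t, v i t k s * star (v i t k s) = v i i k k) (i j k l : ι) :
    ‖v i j k l‖ ≤ 1 := by
  have h1 := norm_sq_le_norm_of_sum_mul_star (fun t => v i t k k) _ (h i k k) i
  have h2 := norm_sq_le_norm_of_sum_mul_star (fun t => v i t k l) _ (h i k l) j
  have h3 : ‖v i i k k‖ ≤ 1 := by nlinarith [norm_nonneg (v i i k k)]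
  nlinarith [norm_nonneg (v i j k l)]

/-- In a unital C*-algebra, the elements of a family satisfying
the `ζ`-twisted Wang relations with weights `d` all have norm at most `1`. -/
theorem wang_generators_norm_le_one {A : Type*} [NormedRing A] [StarRing A]
    [CStarRing A] [NormedAlgebra ℂ A] [StarModule ℂ A] [CompleteSpace A]
    (ζ : ℂ) (hζ : ‖ζ‖ = 1) (n : ℕ) (hn : 1 ≤ n) (d : Fin n → ℤ)
    (u : Fin n → Fin n → Fin n → Fin n → A) (hu : WangRel ζ d u) :
    ∀ i j k l : Fin n, ‖u i j k l‖ ≤ 1 := by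
  obtain ⟨hR1, -, hR3, -, -⟩ := hu
  let : CStarAlgebra A := {}
  have hζ0 : ζ ≠ 0 := by
    rintro rfl
    simp at hζ
  have hstarζ (p : ℤ) : star (ζ ^ p) = ζ ^ (-p) := by
    rw [star_zpow₀, zpow_neg, ← inv_zpow]
    congr 1
    exact (Complex.inv_eq_conj hζ).symm
  set v : Fin n → Fin n → Fin n → Fin n → A :=
    fun i j k l => ζ ^ (d j * (d k - d i + d j - d l)) • u i j k l with hv
  have hstar (i j k l : Fin n) : star (v i j k l) = v j i l k := by
    simp only [hv]
    rw [star_smul, hstarζ, hR3, smul_smul, ← zpow_add₀ hζ0]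
    congr 2
    ring
  intro i j k l
  have key := norm_le_one_of_sum_mul_star v (fun i k s => by
    simpa only [hstar, if_true] using hR1 i i k k s s) i j k l
  simpa only [hv, norm_smul, norm_zpow, hζ, one_zpow, one_mul] using key
end

section
/- Let C be a unital complex *-algebra, ζ a complex number with |ζ| = 1, m ≥ 1, positive integers n_1, …, n_m, and for each 1 ≤ x ≤ m integers d^x_1, …, d^x_{n_x}. Suppose C contains a system of direct-sum matrix units (e_{ij,x}) (1 ≤ x ≤ m, 1 ≤ i,j ≤ n_x), i.e. e_{ij,x}e_{kl,y} = δ_{j,k}δ_{x,y}e_{il,x}, (e_{ij,x})* = e_{ji,x}, Σ_{x=1}^m Σ_{i=1}^{n_x} e_{ii,x} = 1, and a family (b^{ij}_{kl,xy}) satisfying the direct-sum ζ-twisted Wang relations with weights (d^x_i) together with the commutation rule b^{ij}_{kl,xy}·e_{rs,w} = ζ^{(d^w_r − d^w_s)(d^y_k − d^x_i + d^x_j − d^y_l)}·e_{rs,w}·b^{ij}_{kl,xy} for all admissible indices. Define η_{ij,x} := Σ_{y=1}^m Σ_{r,s=1}^{n_y} e_{rs,y}·b^{rs}_{ij,yx}.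 Then the η_{ij,x} again form a system of direct-sum matrix units: η_{ij,x}·η_{kl,y} = δ_{j,k}δ_{x,y}·η_{il,x}, (η_{ij,x})* = η_{ji,x}, and Σ_{x=1}^m Σ_{i=1}^{n_x} η_{ii,x} = 1. -/
/-!
Every claim reduces to a computation on the coefficient of `e_{rv,p}` once each `b` has been moved
to the right of each `e` by the commutation rule.

* Product: the matrix unit relations leave
  `Σ_s ζ^{(d_s - d_v)(d_i - d_r + d_s - d_j)} b^{rs}_{ij} b^{sv}_{kl}` as the coefficient of
  `e_{rv,p}`. The exponent differs from the one on the left of (S1) by an amount independent of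
  `s`, so (S1) evaluates the sum (`DSWangRel.sum_mul`); when `j = k` the remaining powers of `ζ`
  cancel.
* Star: the power of `ζ` coming from (S3) is inverse to the one produced by commuting `b^{sr}_{ji}`
  past `e_{sr}`.
* Unit: (S4) collapses the coefficient of `e_{rs,p}` to `δ_{rs}`.
-/

open Finset

/-- The direct-sum `ζ`-twisted Wang relations with weights `d` for a family
`u : (x y : Fin m) → Fin (n x) → Fin (n x) → Fin (n y) → Fin (n y) → A`,
where `u x y i j k l` stands for `u^{ij}_{kl,xy}`. -/
def DSWangRel {A : Type*} [Ring A] [Algebra ℂ A] [StarRing A]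
    (ζ : ℂ) {m : ℕ} (n : Fin m → ℕ) (d : (x : Fin m) → Fin (n x) → ℤ)
    (u : (x y : Fin m) → Fin (n x) → Fin (n x) → Fin (n y) → Fin (n y) → A) : Prop :=
  -- (S1)
  (∀ (x y w : Fin m) (i j : Fin (n x)) (k s : Fin (n y)) (m' l : Fin (n w)),
    ∑ t : Fin (n x),
        (ζ ^ (d x t * (d y k - d x i + d x t - d y s)) • u x y i t k s) *
          (ζ ^ (d x j * (d w m' - d x t + d x j - d w l)) • u x w t j m' l) =
      if h : y = w then
        (if s = Fin.cast (congrArg n h.symm) m' then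
          ζ ^ (d x j * (d y k - d x i + d x j - d y (Fin.cast (congrArg n h.symm) l))) •
            u x y i j k (Fin.cast (congrArg n h.symm) l)
        else 0)
      else 0) ∧
  -- (S2)
  (∀ (x y w : Fin m) (i s : Fin (n y)) (m' j : Fin (n w)) (k l : Fin (n x)),
    ∑ t : Fin (n x),
        (ζ ^ (d y s * (d x k - d y i + d y s - d x t)) • u y x i s k t) *
          (ζ ^ (d w j * (d x t - d w m' + d w j - d x l)) • u w x m' j t l) =
      if h : y = w then
        (if s = Fin.cast (congrArg n h.symm) m' then
          ζ ^ (d y (Fin.cast (congrArg n h.symm) j) *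
              (d x k - d y i + d y (Fin.cast (congrArg n h.symm) j) - d x l)) •
            u y x i (Fin.cast (congrArg n h.symm) j) k l
        else 0)
      else 0) ∧
  -- (S3)
  (∀ (x y : Fin m) (i j : Fin (n x)) (k l : Fin (n y)),
    star (u x y i j k l) =
      ζ ^ ((d x i - d x j) * (d y l - d x j + d x i - d y k)) • u x y j i l k) ∧
  -- (S4)
  (∀ (x : Fin m) (i j : Fin (n x)),
    ∑ y : Fin m, ∑ r : Fin (n y), u x y i j r r = if i = j then 1 else 0) ∧
  -- (S5)
  (∀ (y : Fin m) (k l : Fin (n y)),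
    ∑ x : Fin m, ∑ r : Fin (n x), u x y r r k l = if k = l then 1 else 0)

theorem sum_sum_comm {A κ : Type*} [AddCommMonoid A] [Fintype κ] {m : ℕ} {n : Fin m → ℕ}
    (f : (x : Fin m) → Fin (n x) → κ → A) :
    ∑ x, ∑ i, ∑ a, f x i a = ∑ a, ∑ x, ∑ i, f x i a := by
  rw [Finset.sum_comm (s := Finset.univ (α := κ))]
  exact Finset.sum_congr rfl fun x _ => Finset.sum_comm

/-- Relation (S1), rewritten with the powers of `ζ` that arise when `b` is commuted past `e` in a
product of two `η`s. -/
theorem DSWangRel.sum_mul {A : Type*} [Ring A] [Algebra ℂ A] [StarRing A]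
    {ζ : ℂ} (hζ : ζ ≠ 0) {m : ℕ} {n : Fin m → ℕ} {d : (x : Fin m) → Fin (n x) → ℤ}
    {b : (x y : Fin m) → Fin (n x) → Fin (n x) → Fin (n y) → Fin (n y) → A}
    (hb : DSWangRel ζ n d b) (p x y : Fin m) (r v : Fin (n p))
    (i j : Fin (n x)) (k l : Fin (n y)) :
    ∑ s : Fin (n p), ζ ^ ((d p s - d p v) * (d x i - d p r + d p s - d x j)) •
        (b p x r s i j * b p y s v k l) =
      if h : x = y then
        (if Fin.cast (congrArg n h) j = k then
          b p x r v i (Fin.cast (congrArg n h.symm) l)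
        else 0)
      else 0 := by
  -- The `s`-independent factor by which the summands of (S1) differ from the present ones.
  have key : ∀ s : Fin (n p),
      ζ ^ ((d p s - d p v) * (d x i - d p r + d p s - d x j)) •
        (b p x r s i j * b p y s v k l) =
      ζ ^ (-(d p v * (d y k + d p v - d y l + d x i - d p r - d x j))) •
        ((ζ ^ (d p s * (d x i - d p r + d p s - d x j)) • b p x r s i j) *
          (ζ ^ (d p v * (d y k - d p s + d p v - d y l)) • b p y s v k l)) := by
    intro s
    rw [smul_mul_smul_comm, smul_smul, ← zpow_add₀ hζ, ← zpow_add₀ hζ]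
    congr 2
    ring
  rw [Finset.sum_congr rfl fun s _ => key s, ← Finset.smul_sum, hb.1 p x y r v i j k l]
  by_cases h : x = y
  · subst h
    by_cases hjk : j = k
    · subst hjk
      simp only [Fin.cast_eq_self, dite_true, if_true]
      rw [smul_smul, ← zpow_add₀ hζ]
      convert one_smul ℂ _ using 2
      convert zpow_zero ζ using 2
      ring
    · simp [hjk]
  · simp [h]

/-- Given direct-sum matrix units `(e_{ij,x})` and a family
`(b^{ij}_{kl,xy})` satisfying the direct-sum `ζ`-twisted Wang relations with
the braided commutation rule, the elements
`η_{ij,x} = Σ_y Σ_{r,s} e_{rs,y}·b^{rs}_{ij,yx}` again form a system of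
direct-sum matrix units. -/
theorem ds_braided_action_on_matrix_units {C : Type*} [Ring C] [Algebra ℂ C]
    [StarRing C] [StarModule ℂ C]
    (ζ : ℂ) (hζ : ‖ζ‖ = 1) (m : ℕ) (hm : 1 ≤ m)
    (n : Fin m → ℕ) (hn : ∀ x, 1 ≤ n x) (d : (x : Fin m) → Fin (n x) → ℤ)
    (e : (x : Fin m) → Fin (n x) → Fin (n x) → C)
    (he_mul : ∀ (x y : Fin m) (i j : Fin (n x)) (k l : Fin (n y)),
      e x i j * e y k l =
        if h : x = y then
          (if Fin.cast (congrArg n h) j = k then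
            e x i (Fin.cast (congrArg n h.symm) l)
          else 0)
        else 0)
    (he_star : ∀ (x : Fin m) (i j : Fin (n x)), star (e x i j) = e x j i)
    (he_sum : ∑ x : Fin m, ∑ i : Fin (n x), e x i i = 1)
    (b : (x y : Fin m) → Fin (n x) → Fin (n x) → Fin (n y) → Fin (n y) → C)
    (hb : DSWangRel ζ n d b)
    (hcomm : ∀ (x y w : Fin m) (i j : Fin (n x)) (k l : Fin (n y)) (r s : Fin (n w)),
      b x y i j k l * e w r s =
        ζ ^ ((d w r - d w s) * (d y k - d x i + d x j - d y l)) •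
          (e w r s * b x y i j k l)) :
    (∀ (x y : Fin m) (i j : Fin (n x)) (k l : Fin (n y)),
      (∑ p : Fin m, ∑ r : Fin (n p), ∑ s : Fin (n p), e p r s * b p x r s i j) *
          (∑ p : Fin m, ∑ r : Fin (n p), ∑ s : Fin (n p), e p r s * b p y r s k l) =
        if h : x = y then
          (if Fin.cast (congrArg n h) j = k then
            ∑ p : Fin m, ∑ r : Fin (n p), ∑ s : Fin (n p),
              e p r s * b p x r s i (Fin.cast (congrArg n h.symm) l)
          else 0)
        else 0) ∧
    (∀ (x : Fin m) (i j : Fin (n x)),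
      star (∑ p : Fin m, ∑ r : Fin (n p), ∑ s : Fin (n p), e p r s * b p x r s i j) =
        ∑ p : Fin m, ∑ r : Fin (n p), ∑ s : Fin (n p), e p r s * b p x r s j i) ∧
    (∑ x : Fin m, ∑ i : Fin (n x),
        ∑ p : Fin m, ∑ r : Fin (n p), ∑ s : Fin (n p), e p r s * b p x r s i i) = 1 := by
  have hζ0 : ζ ≠ 0 := by
    rintro rfl
    simp at hζ
  refine ⟨?_, ?_, ?_⟩
  · intro x y i j k l
    -- Multiplying by one summand `e_{tv,p} b^{tv}_{kl}` on the right selects the terms `e_{rt,p} …`.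
    have hterm : ∀ (p : Fin m) (t v : Fin (n p)),
        (∑ q : Fin m, ∑ r : Fin (n q), ∑ s : Fin (n q), e q r s * b q x r s i j) *
          (e p t v * b p y t v k l) =
        ∑ r : Fin (n p), e p r v *
          (ζ ^ ((d p t - d p v) * (d x i - d p r + d p t - d x j)) •
            (b p x r t i j * b p y t v k l)) := by
      intro p t v
      have hone : ∀ (q : Fin m) (r s : Fin (n q)),
          e q r s * b q x r s i j * (e p t v * b p y t v k l) =
          ζ ^ ((d p t - d p v) * (d x i - d q r + d q s - d x j)) •
            ((e q r s * e p t v) * (b q x r s i j * b p y t v k l)) := by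
        intro q r s
        rw [mul_assoc, ← mul_assoc (b q x r s i j), hcomm]
        simp only [smul_mul_assoc, mul_smul_comm, mul_assoc]
      simp only [Finset.sum_mul, hone]
      rw [Finset.sum_eq_single p]
      · refine Finset.sum_congr rfl fun r _ => ?_
        rw [Finset.sum_eq_single t]
        · simp [he_mul]
        · intro s _ hs
          simp [he_mul, hs]
        · simp
      · intro q _ hq
        simp [he_mul, hq]
      · simp
    rw [Finset.mul_sum]
    simp only [Finset.mul_sum, hterm]
    have hcoef : ∀ p : Fin m,
        ∑ t : Fin (n p), ∑ v : Fin (n p), ∑ r : Fin (n p), e p r v *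
          (ζ ^ ((d p t - d p v) * (d x i - d p r + d p t - d x j)) •
            (b p x r t i j * b p y t v k l)) =
        ∑ r : Fin (n p), ∑ v : Fin (n p), e p r v *
          (if h : x = y then
            (if Fin.cast (congrArg n h) j = k then
              b p x r v i (Fin.cast (congrArg n h.symm) l)
            else 0)
          else 0) := by
      intro p
      rw [Finset.sum_comm, Finset.sum_comm (s := Finset.univ (α := Fin (n p)))
        (f := fun r v => e p r v * _)]
      refine Finset.sum_congr rfl fun v _ => ?_
      rw [Finset.sum_comm]
      refine Finset.sum_congr rfl fun r _ => ?_
      rw [← Finset.mul_sum, hb.sum_mul hζ0]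
    simp only [hcoef]
    by_cases h : x = y
    · subst h
      by_cases hjk : j = k <;> simp [hjk]
    · simp [h]
  · intro x i j
    have hone : ∀ (p : Fin m) (r s : Fin (n p)),
        star (e p r s * b p x r s i j) = e p s r * b p x s r j i := by
      intro p r s
      rw [star_mul, he_star, hb.2.2.1, smul_mul_assoc, hcomm, smul_smul, ← zpow_add₀ hζ0]
      convert one_smul ℂ _ using 2
      convert zpow_zero ζ using 2
      ring
    simp only [star_sum, hone]
    exact Finset.sum_congr rfl fun p _ => Finset.sum_comm
  · have hswap : (∑ x : Fin m, ∑ i : Fin (n x),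
        ∑ p : Fin m, ∑ r : Fin (n p), ∑ s : Fin (n p), e p r s * b p x r s i i) =
        ∑ p : Fin m, ∑ r : Fin (n p), ∑ s : Fin (n p),
          e p r s * ∑ x : Fin m, ∑ i : Fin (n x), b p x r s i i := by
      simp only [Finset.mul_sum]
      rw [sum_sum_comm]
      refine Finset.sum_congr rfl fun p _ => ?_
      rw [sum_sum_comm]
      refine Finset.sum_congr rfl fun r _ => ?_
      rw [sum_sum_comm]
    rw [hswap]
    simp only [hb.2.2.2.1]
    simpa using he_sum
end
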